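/- Define, for a positive integer n, W_B(n) = cos(π/n − (1/2)·arcsin((1/2)·sin(2π/n))) and U_W(n) = cos(π/(2n)). Then, as n → ∞ over the positive integers, U_W(n) − W_B(n) = π⁴/(8n⁴) + 11π⁶/(192n⁶) + O(1/n⁸); that is, the function n ↦ cos(π/(2n)) − cos(π/n − (1/2)·arcsin((1/2)·sin(2π/n))) − π⁴/(8n⁴) − 11π⁶/(192n⁶) is O(n⁻⁸) along the filter atTop. -/

import Mathlib

open Real Filter Asymptotics

open scoped Topology

lemma aux_sin :
    (fun y : ℝ => sin y - (y - y ^ 3 / 6 + y ^ 5 / 120)) =O[𝓝 0] (fun y : ℝ => y ^ 7) := by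
  refine IsBigO.of_bound 1 ?_
  have h1 : ∀ᶠ y : ℝ in 𝓝 0, |y| < 1 := by
    have := Metric.ball_mem_nhds (0 : ℝ) one_pos
    filter_upwards [this] with y hy
    simpa using hy
  filter_upwards [h1] with y hy
  have hb := Complex.exp_bound (x := (y : ℂ) * Complex.I) (by simpa using hy.le)
    (n := 7) (by norm_num)
  have him := (Complex.abs_im_le_norm _).trans hb
  have e : (Complex.exp ((y : ℂ) * Complex.I) -
      ∑ m ∈ Finset.range 7, ((y : ℂ) * Complex.I) ^ m / (m.factorial : ℂ)) =
      ((cos y - (1 - y ^ 2 / 2 + y ^ 4 / 24 - y ^ 6 / 720) : ℝ) : ℂ) +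
      ((sin y - (y - y ^ 3 / 6 + y ^ 5 / 120) : ℝ) : ℂ) * Complex.I := by
    rw [Complex.exp_mul_I]
    have h2 := Complex.I_sq
    have h3 : Complex.I ^ 3 = -Complex.I := by rw [pow_succ, h2]; ring
    have h4 : Complex.I ^ 4 = 1 := Complex.I_pow_four
    have h5 : Complex.I ^ 5 = Complex.I := by rw [pow_succ, h4]; ring
    have h6 : Complex.I ^ 6 = -1 := by rw [pow_succ, h5, ← sq, h2]
    simp only [Finset.sum_range_succ, Finset.sum_range_zero, mul_pow, h2, h3, h4, h5, h6]
    simp only [Nat.factorial]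
    push_cast
    ring
  rw [e] at him
  rw [Complex.add_im, Complex.ofReal_im, Complex.im_ofReal_mul, Complex.I_im] at him
  simp only [norm_mul, Complex.norm_real, Complex.norm_I, Real.norm_eq_abs, mul_one,
    zero_add] at him
  rw [Real.norm_eq_abs, Real.norm_eq_abs, abs_pow]
  refine him.trans ?_
  rw [mul_comm]
  gcongr
  norm_num [Nat.factorial]

lemma aux_cos :
    (fun y : ℝ => cos y - (1 - y ^ 2 / 2 + y ^ 4 / 24 - y ^ 6 / 720))
      =O[𝓝 0] (fun y : ℝ => y ^ 8) := by
  refine IsBigO.of_bound 1 ?_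
  have h1 : ∀ᶠ y : ℝ in 𝓝 0, |y| < 1 := by
    have := Metric.ball_mem_nhds (0 : ℝ) one_pos
    filter_upwards [this] with y hy
    simpa using hy
  filter_upwards [h1] with y hy
  have hb := Complex.exp_bound (x := (y : ℂ) * Complex.I) (by simpa using hy.le)
    (n := 8) (by norm_num)
  have him := (Complex.abs_re_le_norm _).trans hb
  have e : (Complex.exp ((y : ℂ) * Complex.I) -
      ∑ m ∈ Finset.range 8, ((y : ℂ) * Complex.I) ^ m / (m.factorial : ℂ)) =
      ((cos y - (1 - y ^ 2 / 2 + y ^ 4 / 24 - y ^ 6 / 720) : ℝ) : ℂ) +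
      ((sin y - (y - y ^ 3 / 6 + y ^ 5 / 120 - y ^ 7 / 5040) : ℝ) : ℂ) * Complex.I := by
    rw [Complex.exp_mul_I]
    have h2 := Complex.I_sq
    have h3 : Complex.I ^ 3 = -Complex.I := by rw [pow_succ, h2]; ring
    have h4 : Complex.I ^ 4 = 1 := Complex.I_pow_four
    have h5 : Complex.I ^ 5 = Complex.I := by rw [pow_succ, h4]; ring
    have h6 : Complex.I ^ 6 = -1 := by rw [pow_succ, h5, ← sq, h2]
    have h7 : Complex.I ^ 7 = -Complex.I := by rw [pow_succ, h6]; ring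
    simp only [Finset.sum_range_succ, Finset.sum_range_zero, mul_pow, h2, h3, h4, h5, h6, h7]
    simp only [Nat.factorial]
    push_cast
    ring
  rw [e] at him
  rw [Complex.add_re, Complex.ofReal_re, Complex.re_ofReal_mul, Complex.I_re] at him
  simp only [norm_mul, Complex.norm_real, Complex.norm_I, Real.norm_eq_abs, mul_one, mul_zero,
    add_zero] at him
  rw [Real.norm_eq_abs, Real.norm_eq_abs, abs_pow]
  refine him.trans ?_
  rw [mul_comm]
  gcongr
  norm_num [Nat.factorial]

/-- A continuous function times `x ^ k` is `O(x ^ k)` at zero. -/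
lemma aux_mul (R : ℝ → ℝ) (hR : Continuous R) (k : ℕ) :
    (fun x : ℝ => x ^ k * R x) =O[𝓝 0] (fun x : ℝ => x ^ k) := by
  have h : R =O[𝓝 0] (fun _ : ℝ => (1 : ℝ)) := hR.continuousAt.isBigO_one ℝ
  simpa using (isBigO_refl (fun x : ℝ => x ^ k) (𝓝 0)).mul h

lemma aux_tendsto (f : ℝ → ℝ) (hf : Continuous f) (h0 : f 0 = 0) :
    Tendsto f (𝓝 0) (𝓝 0) := by
  simpa [h0] using hf.tendsto 0

/-- The polynomial approximating `arcsin (sin (2x) / 2)`. -/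
lemma aux_arcsin :
    (fun x : ℝ => arcsin ((1 / 2) * sin (2 * x)) - (x - x ^ 3 / 2 - x ^ 5 / 8))
      =O[𝓝 0] (fun x : ℝ => x ^ 7) := by
  have hp : Tendsto (fun x : ℝ => x - x ^ 3 / 2 - x ^ 5 / 8) (𝓝 0) (𝓝 0) :=
    aux_tendsto _ (by fun_prop) (by norm_num)
  have hpO : (fun x : ℝ => x - x ^ 3 / 2 - x ^ 5 / 8) =O[𝓝 0] (fun x : ℝ => x) := by
    refine ((aux_mul (fun x => 1 - x ^ 2 / 2 - x ^ 4 / 8) (by fun_prop) 1).congr ?_ ?_) <;>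
      intro x <;> ring
  have h2 : Tendsto (fun x : ℝ => 2 * x) (𝓝 0) (𝓝 0) :=
    aux_tendsto _ (by fun_prop) (by norm_num)
  have hA := (aux_sin.comp_tendsto h2).trans
    (k := fun x : ℝ => x ^ 7) (by
      refine ((aux_mul (fun _ => 128) (by fun_prop) 7).congr ?_ ?_) <;>
        intro x <;> simp only [Function.comp] <;> ring)
  have hB := (aux_sin.comp_tendsto hp).trans (hpO.pow 7)
  have hR := aux_mul (fun x => (1/12) * x ^ 0 + (5/192) * x ^ 2 + (-1/128) * x ^ 4 + (-11/15360) * x ^ 8 + (-1/2048) * x ^ 10 + (1/32768) * x ^ 14 + (1/196608) * x ^ 16 + (1/3932160) * x ^ 18) (by fun_prop) 7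
  have hs : (fun x : ℝ => (1 / 2) * sin (2 * x) - sin (x - x ^ 3 / 2 - x ^ 5 / 8))
      =O[𝓝 0] (fun x : ℝ => x ^ 7) := by
    refine (((hA.const_mul_left (1 / 2)).sub hB).add hR).congr_left ?_
    intro x
    simp only [Function.comp]
    ring
  have hd : HasStrictDerivAt arcsin (1 / √(1 - (0 : ℝ) ^ 2)) 0 :=
    hasStrictDerivAt_arcsin (by norm_num) (by norm_num)
  have hL := hd.hasStrictFDerivAt.isBigO_sub
  have ht : Tendsto (fun x : ℝ => ((1 / 2) * sin (2 * x), sin (x - x ^ 3 / 2 - x ^ 5 / 8)))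
      (𝓝 0) (𝓝 ((0 : ℝ), (0 : ℝ))) := by
    rw [nhds_prod_eq]
    exact (aux_tendsto _ (by fun_prop) (by norm_num)).prodMk
      (aux_tendsto _ (by fun_prop) (by norm_num))
  have hL2 := (hL.comp_tendsto ht).trans hs
  refine hL2.congr' ?_ EventuallyEq.rfl
  have hm : Set.Ioo (-(π / 2)) (π / 2) ∈ 𝓝 (0 : ℝ) :=
    Ioo_mem_nhds (by linarith [pi_pos]) (by linarith [pi_pos])
  filter_upwards [hp hm] with x hx
  simp only [Set.mem_preimage, Set.mem_Ioo] at hx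
  simp only [Function.comp]
  rw [arcsin_sin hx.1.le hx.2.le]

lemma aux_main :
    (fun x : ℝ => cos (x / 2) - cos (x - (1 / 2) * arcsin ((1 / 2) * sin (2 * x))) -
      x ^ 4 / 8 - 11 * x ^ 6 / 192) =O[𝓝 0] (fun x : ℝ => x ^ 8) := by
  have hq : Tendsto (fun x : ℝ => x / 2 + x ^ 3 / 4 + x ^ 5 / 16) (𝓝 0) (𝓝 0) :=
    aux_tendsto _ (by fun_prop) (by norm_num)
  have hqO : (fun x : ℝ => x / 2 + x ^ 3 / 4 + x ^ 5 / 16) =O[𝓝 0] (fun x : ℝ => x) := by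
    refine ((aux_mul (fun x => 1 / 2 + x ^ 2 / 4 + x ^ 4 / 16) (by fun_prop) 1).congr ?_ ?_) <;>
      intro x <;> ring
  have h2 : Tendsto (fun x : ℝ => x / 2) (𝓝 0) (𝓝 0) :=
    aux_tendsto _ (by fun_prop) (by norm_num)
  have hA := (aux_cos.comp_tendsto h2).trans
    (k := fun x : ℝ => x ^ 8) (by
      refine ((aux_mul (fun _ => 1 / 256) (by fun_prop) 8).congr ?_ ?_) <;>
        intro x <;> simp only [Function.comp] <;> ring)
  have hB := (aux_cos.comp_tendsto hq).trans (hqO.pow 8)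
  have hR := aux_mul (fun x => (161/15360) * x ^ 0 + (-37/30720) * x ^ 2 + (-95/73728) * x ^ 4 + (-67/196608) * x ^ 6 + (-23/491520) * x ^ 8 + (11/2949120) * x ^ 10 + (29/7864320) * x ^ 12 + (13/12582912) * x ^ 14 + (7/37748736) * x ^ 16 + (1/41943040) * x ^ 18 + (1/503316480) * x ^ 20 + (1/12079595520) * x ^ 22) (by fun_prop) 8
  -- difference of the exact angle and its approximation
  have hD : (fun x : ℝ => (x - (1 / 2) * arcsin ((1 / 2) * sin (2 * x))) -
      (x / 2 + x ^ 3 / 4 + x ^ 5 / 16)) =O[𝓝 0] (fun x : ℝ => x ^ 7) := by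
    refine (aux_arcsin.const_mul_left (-(1 / 2))).congr_left ?_
    intro x
    ring
  have h71 : (fun x : ℝ => x ^ 7) =O[𝓝 0] (fun x : ℝ => x) := by
    refine ((aux_mul (fun x => x ^ 6) (by fun_prop) 1).congr ?_ ?_) <;> intro x <;> ring
  have hS : (fun x : ℝ => (x - (1 / 2) * arcsin ((1 / 2) * sin (2 * x))) +
      (x / 2 + x ^ 3 / 4 + x ^ 5 / 16)) =O[𝓝 0] (fun x : ℝ => x) := by
    refine ((hD.trans h71).add (hqO.const_mul_left 2)).congr_left ?_
    intro x
    ring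
  have hC : (fun x : ℝ => cos (x - (1 / 2) * arcsin ((1 / 2) * sin (2 * x))) -
      cos (x / 2 + x ^ 3 / 4 + x ^ 5 / 16)) =O[𝓝 0] (fun x : ℝ => x ^ 8) := by
    have h8 : (fun x : ℝ => x ^ 8) = fun x : ℝ => x * x ^ 7 := by
      funext x
      ring
    rw [h8]
    refine IsBigO.trans (IsBigO.of_bound 1 (Eventually.of_forall fun x => ?_)) (hS.mul hD)
    rw [cos_sub_cos]
    generalize (x - (1 / 2) * arcsin ((1 / 2) * sin (2 * x))) = a
    generalize (x / 2 + x ^ 3 / 4 + x ^ 5 / 16) = b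
    rw [Real.norm_eq_abs, Real.norm_eq_abs, abs_mul, abs_mul, abs_mul]
    have e1 : |sin ((a + b) / 2)| ≤ |a + b| / 2 := by
      simpa [abs_div] using abs_sin_le_abs (x := (a + b) / 2)
    have e2 : |sin ((a - b) / 2)| ≤ |a - b| / 2 := by
      simpa [abs_div] using abs_sin_le_abs (x := (a - b) / 2)
    have e3 := mul_le_mul e1 e2 (abs_nonneg _) (by positivity)
    have e4 : 0 ≤ |a + b| * |a - b| := by positivity
    have e5 : |(-2 : ℝ)| = 2 := by norm_num
    rw [e5]
    nlinarith
  refine (((hA.sub hB).sub hC).add hR).congr_left ?_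
  intro x
  simp only [Function.comp]
  ring

/-- Asymptotics of the width gap for the polygon `B_n`:
`cos(π/2n) − W(B_n) = π⁴/(8 n⁴) + 11π⁶/(192 n⁶) + O(1/n⁸)` as `n → ∞`. -/
theorem width_gap_Bn_asymptotics :
    (fun n : ℕ =>
        cos (π / (2 * n)) -
          cos (π / n - (1 / 2) * arcsin ((1 / 2) * sin (2 * π / n))) -
          π ^ 4 / (8 * (n : ℝ) ^ 4) - 11 * π ^ 6 / (192 * (n : ℝ) ^ 6)) =O[atTop]
      (fun n : ℕ => 1 / (n : ℝ) ^ 8) := by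
  have ht : Tendsto (fun n : ℕ => π / (n : ℝ)) atTop (𝓝 0) :=
    tendsto_const_div_atTop_nhds_zero_nat π
  have h := aux_main.comp_tendsto ht
  have h8 : ((fun x : ℝ => x ^ 8) ∘ fun n : ℕ => π / (n : ℝ)) =O[atTop]
      (fun n : ℕ => 1 / (n : ℝ) ^ 8) := by
    refine ((isBigO_refl (fun n : ℕ => 1 / (n : ℝ) ^ 8) atTop).const_mul_left (π ^ 8)).congr_left ?_
    intro n
    simp only [Function.comp, div_pow]
    ring
  refine (h.trans h8).congr_left ?_
  intro n
  have e1 : π / (n : ℝ) / 2 = π / (2 * n) := by rw [div_div, mul_comm]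
  have e2 : 2 * (π / (n : ℝ)) = 2 * π / n := by ring
  simp only [Function.comp]
  rw [e1, e2]
  simp only [div_pow]
  ring
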